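/- Let f be an almost embedding of K₄ in the plane. Then the integer w_f(234, 1) + w_f(134, 2) + w_f(124, 3) + w_f(123, 4) is odd, where w_f(ijk, l) := w'(p_{ij}, f_l) + w'(p_{jk}, f_l) + w'(p_{ki}, f_l). -/

import Mathlib

/-- Sum of the oriented angles ∠A₁OA₂ + ∠A₂OA₃ + ⋯ + ∠A_{m−1}OA_m at `O`
along a polygonal line given as a list of points in the plane `ℂ`,
where ∠AOB := Complex.arg ((B − O)/(A − O)) ∈ (−π, π]. -/
noncomputable def angSum (O : ℂ) : List ℂ → ℝ
  | a :: b :: rest => Complex.arg ((b - O) / (a - O)) + angSum O (b :: rest)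
  | _ => 0

/-- `w'(A₁…A_m, O)`: the (non-closed) winding number of a polygonal line around `O`,
i.e. `(∠A₁OA₂ + ⋯ + ∠A_{m−1}OA_m) / (2π)`. -/
noncomputable def wp (O : ℂ) (l : List ℂ) : ℝ := angSum O l / (2 * Real.pi)

/-- `w(A₁…A_m, O)`: the winding number of the closed polygonal line `A₁…A_m` around `O`,
i.e. `(∠A₁OA₂ + ⋯ + ∠A_{m−1}OA_m + ∠A_mOA₁) / (2π)`. -/
noncomputable def wcl (O : ℂ) (l : List ℂ) : ℝ := wp O (l ++ [l.headI])

/-- The image of a polygonal line: the union of the segments between consecutive points. -/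
def imagePL : List ℂ → Set ℂ
  | [] => ∅
  | [a] => {a}
  | a :: b :: rest => segment ℝ a b ∪ imagePL (b :: rest)

lemma head_mem_imagePL (a : ℂ) (l : List ℂ) : a ∈ imagePL (a :: l) := by
  cases l with
  | nil => simp [imagePL]
  | cons b r => exact Or.inl (left_mem_segment ℝ a b)

lemma angSum_append (O : ℂ) (l : List ℂ) (a : ℂ) (r : List ℂ) :
    angSum O (l ++ a :: r) = angSum O (l ++ [a]) + angSum O (a :: r) := by
  induction l with
  | nil => simp [angSum]
  | cons x l ih =>
    cases l with
    | nil => simp [angSum]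
    | cons y l =>
      simp only [List.cons_append, angSum] at ih ⊢
      rw [ih]; ring

lemma arg_ne_pi_of_notMem (O a b : ℂ) (h : O ∉ segment ℝ a b) :
    Complex.arg ((b - O) / (a - O)) ≠ Real.pi := by
  intro hp
  rw [Complex.arg_eq_pi_iff] at hp
  obtain ⟨h1, h2⟩ := hp
  apply h
  have ha : a - O ≠ 0 := by
    intro h0
    rw [h0] at h1
    simp at h1
  set z := (b - O) / (a - O) with hz
  have hzr : z = (z.re : ℂ) := by
    apply Complex.ext <;> simp [h2]
  have hb : b = O + (z.re : ℂ) * (a - O) := by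
    rw [← hzr, hz, div_mul_cancel₀ _ ha]; ring
  have hpos : 0 < 1 - z.re := by linarith
  have hne : (1 : ℂ) - (z.re : ℂ) ≠ 0 := by
    exact_mod_cast hpos.ne'
  refine ⟨-z.re / (1 - z.re), 1 / (1 - z.re), ?_, ?_, ?_, ?_⟩
  · apply div_nonneg <;> linarith
  · positivity
  · field_simp
    ring
  · simp only [Complex.real_smul]
    rw [hb]
    push_cast
    field_simp
    ring

lemma angSum_reverse (O : ℂ) (l : List ℂ) (h : O ∉ imagePL l) :
    angSum O l.reverse = - angSum O l := by
  induction l with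
  | nil => simp [angSum]
  | cons a l ih =>
    cases l with
    | nil => simp [angSum]
    | cons b r =>
      simp only [imagePL, Set.mem_union, not_or] at h
      have := ih h.2
      rw [List.reverse_cons] at this
      rw [List.reverse_cons, List.reverse_cons, List.append_assoc, List.singleton_append,
        angSum_append, this]
      simp only [angSum]
      have h3 := arg_ne_pi_of_notMem O a b h.1
      rw [← inv_div, Complex.arg_inv, if_neg h3]
      ring

lemma wp_reverse (O : ℂ) (l : List ℂ) (h : O ∉ imagePL l) :
    wp O l.reverse = - wp O l := by
  rw [wp, wp, angSum_reverse O l h]; ring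

lemma angSum_coe (O : ℂ) (l : List ℂ) (a : ℂ) (h : O ∉ imagePL (a :: l)) :
    ((angSum O (a :: l) : ℝ) : Real.Angle) =
      (Complex.arg ((a :: l).getLast (by simp) - O) : Real.Angle) -
        (Complex.arg (a - O) : Real.Angle) := by
  induction l generalizing a with
  | nil => simp [angSum]
  | cons b r ih =>
    simp only [imagePL, Set.mem_union, not_or] at h
    have ha : a - O ≠ 0 := by
      intro h0
      apply h.1
      rw [← sub_eq_zero.mp h0]
      exact left_mem_segment ℝ a b
    have hb : b - O ≠ 0 := by
      intro h0
      apply h.1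
      rw [← sub_eq_zero.mp h0]
      exact right_mem_segment ℝ a b
    rw [List.getLast_cons (by simp : b :: r ≠ [])]
    simp only [angSum]
    rw [Real.Angle.coe_add, ih b h.2, Complex.arg_div_coe_angle hb ha]
    abel

lemma arg_div_of_re_pos {z w : ℂ} (hz : 0 < z.re) (hw : 0 < w.re) :
    Complex.arg (z / w) = Complex.arg z - Complex.arg w := by
  have hz0 : z ≠ 0 := by rintro rfl; simp at hz
  have hw0 : w ≠ 0 := by rintro rfl; simp at hw
  have h1 := abs_lt.mp (Complex.abs_arg_lt_pi_div_two_iff.mpr (Or.inl hz))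
  have h2 := abs_lt.mp (Complex.abs_arg_lt_pi_div_two_iff.mpr (Or.inl hw))
  have h : ((Complex.arg (z / w) : ℝ) : Real.Angle) =
      ((Complex.arg z - Complex.arg w : ℝ) : Real.Angle) := by
    rw [Complex.arg_div_coe_angle hz0 hw0, Real.Angle.coe_sub]
  rw [← Complex.arg_coe_angle_toReal_eq_arg, h, Real.Angle.toReal_coe_eq_self_iff]
  constructor <;> linarith

lemma exists_sep (a b c d : ℂ) (h : Disjoint (segment ℝ a b) (segment ℝ c d)) :
    ∃ u : ℂ, u ≠ 0 ∧ ∀ x ∈ segment ℝ a b, ∀ y ∈ segment ℝ c d, 0 < (u * (x - y)).re := by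
  have cp : ∀ a b : ℂ, IsCompact (segment ℝ a b) := by
    intro a b
    rw [segment_eq_image_lineMap]
    exact isCompact_Icc.image (AffineMap.lineMap_continuous)
  obtain ⟨φ, s, t, h1, h2, h3⟩ := geometric_hahn_banach_compact_closed (convex_segment c d)
    (cp c d) (convex_segment a b) (cp a b).isClosed h.symm
  have key : ∀ z : ℂ, ((⟨φ 1, - φ Complex.I⟩ : ℂ) * z).re = φ z := by
    intro z
    have : z = z.re • (1 : ℂ) + z.im • Complex.I := by
      apply Complex.ext <;> simp
    conv_rhs => rw [this, map_add, map_smul, map_smul]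
    simp [Complex.mul_re]
    ring
  have hall : ∀ x ∈ segment ℝ a b, ∀ y ∈ segment ℝ c d,
      0 < ((⟨φ 1, - φ Complex.I⟩ : ℂ) * (x - y)).re := by
    intro x hx y hy
    rw [key, map_sub]
    have := h1 y hy
    have := h3 x hx
    linarith
  refine ⟨_, ?_, hall⟩
  intro h0
  have := hall a (left_mem_segment ℝ a b) c (left_mem_segment ℝ c d)
  rw [h0] at this
  simp at this

lemma seg_seg (a b c d : ℂ) (h : Disjoint (segment ℝ a b) (segment ℝ c d)) :
    Complex.arg ((d - b) / (c - b)) - Complex.arg ((d - a) / (c - a)) =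
      Complex.arg ((b - d) / (a - d)) - Complex.arg ((b - c) / (a - c)) := by
  obtain ⟨u, hu, H⟩ := exists_sep a b c d h
  have ha := left_mem_segment ℝ a b
  have hb := right_mem_segment ℝ a b
  have hc := left_mem_segment ℝ c d
  have hd := right_mem_segment ℝ c d
  have e1 : (d - b) / (c - b) = (u * (b - d)) / (u * (b - c)) := by
    rw [mul_div_mul_left _ _ hu, ← neg_sub b d, ← neg_sub b c, neg_div_neg_eq]
  have e2 : (d - a) / (c - a) = (u * (a - d)) / (u * (a - c)) := by
    rw [mul_div_mul_left _ _ hu, ← neg_sub a d, ← neg_sub a c, neg_div_neg_eq]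
  have e3 : (b - d) / (a - d) = (u * (b - d)) / (u * (a - d)) := by
    rw [mul_div_mul_left _ _ hu]
  have e4 : (b - c) / (a - c) = (u * (b - c)) / (u * (a - c)) := by
    rw [mul_div_mul_left _ _ hu]
  rw [e1, e2, e3, e4,
    arg_div_of_re_pos (H b hb d hd) (H b hb c hc),
    arg_div_of_re_pos (H a ha d hd) (H a ha c hc),
    arg_div_of_re_pos (H b hb d hd) (H a ha d hd),
    arg_div_of_re_pos (H b hb c hc) (H a ha c hc)]
  ring

lemma seg_line (a b c : ℂ) (m : List ℂ)
    (h : Disjoint (segment ℝ a b) (imagePL (c :: m))) :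
    angSum b (c :: m) - angSum a (c :: m) =
      Complex.arg ((b - (c :: m).getLast (by simp)) / (a - (c :: m).getLast (by simp)))
        - Complex.arg ((b - c) / (a - c)) := by
  induction m generalizing c with
  | nil => simp [angSum]
  | cons d r ih =>
    simp only [imagePL, Set.disjoint_union_right] at h
    have h1 := ih d h.2
    have h2 := seg_seg a b c d h.1
    rw [List.getLast_cons (by simp : d :: r ≠ [])]
    simp only [angSum]
    linarith

lemma line_line (a : ℂ) (l : List ℂ) (c : ℂ) (m : List ℂ)
    (h : Disjoint (imagePL (a :: l)) (imagePL (c :: m))) :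
    angSum ((a :: l).getLast (by simp)) (c :: m) - angSum a (c :: m) =
      angSum ((c :: m).getLast (by simp)) (a :: l) - angSum c (a :: l) := by
  induction l generalizing a with
  | nil => simp [angSum]
  | cons b r ih =>
    simp only [imagePL, Set.disjoint_union_left] at h
    have h1 := ih b h.2
    have h2 := seg_line a b c m h.1
    rw [List.getLast_cons (by simp : b :: r ≠ [])]
    simp only [angSum]
    linarith

/-- Let `f` be an almost embedding of `K₄` in the plane (four pairwise
distinct points `f 0, f 1, f 2, f 3`, a polygonal line `p i j` joining `f i` to `f j`
for each edge `{i,j}` with `p j i` the reverse of `p i j`, images of non-adjacent edges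
disjoint, and `f l` not on the image of any edge `{i,j}` with `l ∉ {i,j}`). Then
`w_f(234, 1) + w_f(134, 2) + w_f(124, 3) + w_f(123, 4)` is an odd integer, where
`w_f(ijk, l) := w'(p i j, f l) + w'(p j k, f l) + w'(p k i, f l)`
(vertices `1,2,3,4` are encoded as `0,1,2,3 : Fin 4`). -/
theorem sum_winding_odd_K4 (f : Fin 4 → ℂ) (p : Fin 4 → Fin 4 → List ℂ)
    (hinj : Function.Injective f)
    (hne : ∀ i j, i ≠ j → p i j ≠ [])
    (hjoin : ∀ i j, ∀ h : i ≠ j,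
      (p i j).headI = f i ∧ (p i j).getLast (hne i j h) = f j)
    (hsym : ∀ i j, p j i = (p i j).reverse)
    (hdisj : ∀ i j k l : Fin 4, i ≠ j → k ≠ l → i ≠ k → i ≠ l → j ≠ k → j ≠ l →
      Disjoint (imagePL (p i j)) (imagePL (p k l)))
    (hvert : ∀ i j l : Fin 4, i ≠ j → l ≠ i → l ≠ j → f l ∉ imagePL (p i j)) :
    ∃ n : ℤ, Odd n ∧
      (wp (f 0) (p 1 2) + wp (f 0) (p 2 3) + wp (f 0) (p 3 1)) +
      (wp (f 1) (p 0 2) + wp (f 1) (p 2 3) + wp (f 1) (p 3 0)) +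
      (wp (f 2) (p 0 1) + wp (f 2) (p 1 3) + wp (f 2) (p 3 0)) +
      (wp (f 3) (p 0 1) + wp (f 3) (p 1 2) + wp (f 3) (p 2 0)) = n := by
  have rep : ∀ i j, i ≠ j → ∃ l, p i j = f i :: l ∧
      ∀ hh : f i :: l ≠ [], (f i :: l).getLast hh = f j := by
    intro i j hij
    obtain ⟨h1, h2⟩ := hjoin i j hij
    generalize hne i j hij = h0 at h2
    generalize p i j = q at h0 h1 h2 ⊢
    cases q with
    | nil => exact absurd rfl h0
    | cons x l =>
      simp only [List.headI] at h1
      subst h1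
      exact ⟨l, rfl, fun _ => h2⟩
  have LL : ∀ i j k l : Fin 4, i ≠ j → k ≠ l → i ≠ k → i ≠ l → j ≠ k → j ≠ l →
      angSum (f j) (p k l) - angSum (f i) (p k l) =
        angSum (f l) (p i j) - angSum (f k) (p i j) := by
    intro i j k l hij hkl hik hil hjk hjl
    have hd := hdisj i j k l hij hkl hik hil hjk hjl
    obtain ⟨A, hA, hA'⟩ := rep i j hij
    obtain ⟨B, hB, hB'⟩ := rep k l hkl
    rw [hA, hB] at hd ⊢
    have := line_line _ _ _ _ hd
    rwa [hA', hB'] at this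
  have MM : ∀ i j l : Fin 4, i ≠ j → l ≠ i → l ≠ j →
      ((angSum (f l) (p i j) : ℝ) : Real.Angle) =
        (Complex.arg (f j - f l) : Real.Angle) - (Complex.arg (f i - f l) : Real.Angle) := by
    intro i j l hij hli hlj
    have hv := hvert i j l hij hli hlj
    obtain ⟨A, hA, hA'⟩ := rep i j hij
    rw [hA] at hv ⊢
    rw [angSum_coe _ _ _ hv, hA']
  have NN : ∀ i j : Fin 4, i ≠ j → (Complex.arg (f i - f j) : Real.Angle) =
      (Complex.arg (f j - f i) : Real.Angle) + (Real.pi : Real.Angle) := by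
    intro i j hij
    rw [← neg_sub, Complex.arg_neg_coe_angle]
    rw [sub_ne_zero]
    exact fun h => hij (hinj h).symm
  have r31 : angSum (f 0) (p 3 1) = - angSum (f 0) (p 1 3) := by
    rw [hsym 1 3]
    exact angSum_reverse _ _ (hvert 1 3 0 (by decide) (by decide) (by decide))
  have r30 : angSum (f 1) (p 3 0) = - angSum (f 1) (p 0 3) := by
    rw [hsym 0 3]
    exact angSum_reverse _ _ (hvert 0 3 1 (by decide) (by decide) (by decide))
  have r30' : angSum (f 2) (p 3 0) = - angSum (f 2) (p 0 3) := by
    rw [hsym 0 3]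
    exact angSum_reverse _ _ (hvert 0 3 2 (by decide) (by decide) (by decide))
  have r20 : angSum (f 3) (p 2 0) = - angSum (f 3) (p 0 2) := by
    rw [hsym 0 2]
    exact angSum_reverse _ _ (hvert 0 2 3 (by decide) (by decide) (by decide))
  have L1 := LL 0 1 2 3 (by decide) (by decide) (by decide) (by decide) (by decide) (by decide)
  have L2 := LL 0 2 1 3 (by decide) (by decide) (by decide) (by decide) (by decide) (by decide)
  have L3 := LL 0 3 1 2 (by decide) (by decide) (by decide) (by decide) (by decide) (by decide)
  have key : ((angSum (f 1) (p 2 3) + angSum (f 2) (p 0 1) + angSum (f 0) (p 1 2)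
      - angSum (f 1) (p 0 3) : ℝ) : Real.Angle) = (Real.pi : Real.Angle) := by
    rw [Real.Angle.coe_sub, Real.Angle.coe_add, Real.Angle.coe_add,
      MM 2 3 1 (by decide) (by decide) (by decide),
      MM 0 1 2 (by decide) (by decide) (by decide),
      MM 1 2 0 (by decide) (by decide) (by decide),
      MM 0 3 1 (by decide) (by decide) (by decide),
      NN 1 2 (by decide), NN 2 0 (by decide), NN 0 1 (by decide)]
    have h2 : (Real.pi : Real.Angle) + (Real.pi : Real.Angle) = 0 :=
      Real.Angle.coe_pi_add_coe_pi
    generalize (Real.pi : Real.Angle) = P at *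
    have h3 : P + P + P = P := by rw [h2, zero_add]
    conv_rhs => rw [← h3]
    abel
  obtain ⟨k, hk⟩ := Real.Angle.angle_eq_iff_two_pi_dvd_sub.mp key
  refine ⟨2 * k + 1, ⟨k, rfl⟩, ?_⟩
  have hpi := Real.pi_pos.ne'
  simp only [wp, r31, r30, r30', r20]
  push_cast
  field_simp
  linarith
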